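/- Let Σ = {a,b,c} and let d₁ be the DTD with rules a → ab | ca | ε, b → ε, c → ε. There is no regular language L over the alphabet of tags {a, b, c, ā, b̄, c̄} such that for every ordered unranked Σ-tree T: T satisfies d₁ if and only if str(T) ∈ L. In particular, Sat(d₁) is not of the form L^str_A for any finite string automaton A. -/

import Mathlib

/-!
The trees used have a spine of `a`-labelled nodes in which every inner spine node may carry an
extra leaf `c` to the left of its spine child and an extra leaf `b` to its right. Such a tree
satisfies `d₁` iff every inner spine node carries exactly one of the two. Its tag string is an
opening part, determined by which levels carry a `c`, followed by a closing part, determined by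
which levels carry a `b` (`rep_spine`).

A DFA with `n` states cannot distinguish all `2 ^ n` opening parts of depth `n`, so it reaches the
same state after the opening parts of two distinct patterns `p` and `q`. Completing both with the
closing part of the complement of `p` gives a tree that satisfies `d₁` in the first case and one
that violates it in the second (`satDTD_spine`), yet the DFA treats them alike.

The trees are assembled with the combinator `node`; `satDTD_node` and `rep_node` compute
satisfaction and the tag string of the result from those of the immediate subtrees.
-/

namespace UnrankedTrees

/-! ### Unranked trees: tree domains and ordered unranked Σ-trees.
Nodes are finite strings over ℕ; a tree domain is a finite prefix-closed set
of nodes such that `s ++ [i] ∈ D` implies `s ++ [j] ∈ D` for all `j < i`. -/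

abbrev Node : Type := List ℕ

/-- An ordered unranked tree over alphabet `A`: a tree domain with a labeling. -/
structure UTree (A : Type) where
  dom : Finset Node
  nil_mem : ([] : Node) ∈ dom
  prefix_closed : ∀ ⦃s t : Node⦄, s ∈ dom → t <+: s → t ∈ dom
  sib_closed : ∀ ⦃s : Node⦄ ⦃i j : ℕ⦄, s ++ [i] ∈ dom → j < i → s ++ [j] ∈ dom
  label : Node → A

namespace UTree

variable {A : Type}

/-- The child relation `≺_ch`. -/
def childR (T : UTree A) (s t : Node) : Prop :=
  s ∈ T.dom ∧ t ∈ T.dom ∧ ∃ i : ℕ, t = s ++ [i]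

/-- The descendant-or-self relation `≺*_ch` (the prefix relation). -/
def descR (T : UTree A) (s t : Node) : Prop :=
  s ∈ T.dom ∧ t ∈ T.dom ∧ s <+: t

/-- The next-sibling relation `≺_ns`. -/
def nsR (T : UTree A) (s t : Node) : Prop :=
  s ∈ T.dom ∧ t ∈ T.dom ∧ ∃ (u : Node) (i : ℕ), s = u ++ [i] ∧ t = u ++ [i + 1]

/-- The sibling ordering `≺*_ns` (reflexive-transitive closure of next-sibling). -/
def sibR (T : UTree A) (s t : Node) : Prop :=
  s ∈ T.dom ∧ t ∈ T.dom ∧ ∃ (u : Node) (i j : ℕ), s = u ++ [i] ∧ t = u ++ [j] ∧ i ≤ j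

/-- The first-child relation `≺_fc`. -/
def firstChildR (T : UTree A) (s t : Node) : Prop :=
  s ∈ T.dom ∧ t ∈ T.dom ∧ t = s ++ [0]

/-- The number of children of a node. -/
noncomputable def childCount (T : UTree A) (s : Node) : ℕ :=
  Set.ncard {i : ℕ | s ++ [i] ∈ T.dom}

/-- The list of children of a node `s`, in sibling order: `s·0, …, s·(n-1)`. -/
noncomputable def childrenList (T : UTree A) (s : Node) : List Node :=
  (List.range (T.childCount s)).map fun i => s ++ [i]

/-- `s` is a leaf of `T`. -/
def isLeaf (T : UTree A) (s : Node) : Prop :=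
  s ∈ T.dom ∧ ∀ i : ℕ, s ++ [i] ∉ T.dom

/-- `s` has no next sibling in `T` (the root also counts as "last"). -/
def isLast (T : UTree A) (s : Node) : Prop :=
  s = [] ∨ ∃ (u : Node) (i : ℕ), s = u ++ [i] ∧ u ++ [i + 1] ∉ T.dom

end UTree

/-! ### DTDs and extended DTDs. -/

/-- A tree satisfies the DTD `d` (one rule `a → d a` per letter `a`) if at
every node labelled `a`, the string of children labels matches `d a`. -/
def SatDTD {A : Type} (T : UTree A) (d : A → RegularExpression A) : Prop :=
  ∀ s ∈ T.dom, ((T.childrenList s).map T.label) ∈ (d (T.label s)).matches'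

/-- Relabeling of a tree along `g`. -/
def UTree.relabel {B A : Type} (T : UTree B) (g : B → A) : UTree A :=
  { dom := T.dom, nil_mem := T.nil_mem, prefix_closed := T.prefix_closed,
    sib_closed := T.sib_closed, label := fun s => g (T.label s) }

/-- An extended DTD `(Σ', d', g)` over `A`: an alphabet `B ⊇ A` (witnessed by
the embedding `incl`), a DTD `d` over `B`, and a relabeling `g : B → A`. -/
structure EDTD (A : Type) where
  B : Type
  fintype_B : Fintype B
  incl : A ↪ B
  g : B → A
  d : B → RegularExpression B

/-- `T` satisfies the extended DTD `E` iff `T = g(T')` for some `B`-tree `T'`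
satisfying the DTD. -/
def EDTD.SatE {A : Type} (E : EDTD A) (T : UTree A) : Prop :=
  ∃ T' : UTree E.B, SatDTD T' E.d ∧ T = T'.relabel E.g

/-- The three-letter alphabet Σ = {a, b, c}. -/
inductive ABC : Type where
  | a : ABC
  | b : ABC
  | c : ABC
deriving DecidableEq

/-- Tags: `Sum.inl x` is the opening tag `<x>`, `Sum.inr x` the closing tag `</x>`. -/
abbrev Tag : Type := ABC ⊕ ABC

/-- `strAux T fuel s` computes the tag string of the subtree of `T` rooted at
`s`, for any sufficiently large `fuel` (larger than the remaining depth). -/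
noncomputable def strAux (T : UTree ABC) : ℕ → Node → List Tag
  | 0, _ => []
  | fuel + 1, s =>
      Sum.inl (T.label s) ::
        ((List.range (T.childCount s)).map fun i => strAux T fuel (s ++ [i])).flatten
        ++ [Sum.inr (T.label s)]

/-- The string representation `str(T)` of a tree: `str(T) = a str(T₀) ⋯ str(T_{n-1}) ā`
where `a` is the root label and `T₀, …, T_{n-1}` are the root subtrees.
(The fuel `(max length of a node) + 1` always suffices.) -/
noncomputable def strOf (T : UTree ABC) : List Tag :=
  strAux T (T.dom.sup List.length + 1) []

/-- The DTD `d₁`:  a → ab | ca | ε,  b → ε,  c → ε. -/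
def d1 : ABC → RegularExpression ABC
  | ABC.a =>
      RegularExpression.plus
        (RegularExpression.comp (RegularExpression.char ABC.a) (RegularExpression.char ABC.b))
        (RegularExpression.plus
          (RegularExpression.comp (RegularExpression.char ABC.c) (RegularExpression.char ABC.a))
          RegularExpression.epsilon)
  | ABC.b => RegularExpression.epsilon
  | ABC.c => RegularExpression.epsilon

/-! ### Grafting trees under a new root -/

/-- The tree with root label `x` whose immediate subtrees are `f 0, …, f (n - 1)`.
The values `f i` with `n ≤ i` are irrelevant. -/
def node {A : Type} (x : A) (n : ℕ) (f : ℕ → UTree A) : UTree A where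
  dom := insert [] ((Finset.range n).biUnion fun i => (f i).dom.image (List.cons i))
  nil_mem := by simp
  prefix_closed := by
    intro s t hs ht
    cases t with
    | nil => simp
    | cons j t =>
      obtain ⟨r, rfl⟩ := ht
      simp at hs ⊢
      exact ⟨hs.1, (f j).prefix_closed hs.2 (List.prefix_append _ _)⟩
  sib_closed := by
    intro s i j hs hj
    cases s with
    | nil =>
      simp at hs ⊢
      exact ⟨hj.trans hs.1, (f j).nil_mem⟩
    | cons k s =>
      simp at hs ⊢
      exact ⟨hs.1, (f k).sib_closed hs.2 hj⟩
  label s := match s with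
    | [] => x
    | i :: s => (f i).label s

section
variable {A : Type} (x : A) (n : ℕ) (f : ℕ → UTree A)

lemma cons_mem_node (i : ℕ) (s : Node) : i :: s ∈ (node x n f).dom ↔ i < n ∧ s ∈ (f i).dom := by
  simp [node]

lemma childCount_node_nil : (node x n f).childCount [] = n := by
  have h : {i : ℕ | [] ++ [i] ∈ (node x n f).dom} = (Finset.range n : Set ℕ) := by
    ext i
    simp [cons_mem_node, (f i).nil_mem]
  rw [UTree.childCount, h, Set.ncard_coe_finset, Finset.card_range]

lemma childCount_node_cons {i : ℕ} (hi : i < n) (s : Node) :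
    (node x n f).childCount (i :: s) = (f i).childCount s := by
  simp [UTree.childCount, cons_mem_node, hi]

lemma satDTD_node (d : A → RegularExpression A) :
    SatDTD (node x n f) d ↔
      (List.range n).map (fun i => (f i).label []) ∈ (d x).matches' ∧
        ∀ i < n, SatDTD (f i) d := by
  have root : ((node x n f).childrenList []).map (node x n f).label =
      (List.range n).map (fun i => (f i).label []) := by
    simp only [UTree.childrenList, childCount_node_nil, List.map_map]
    rfl
  have sub : ∀ i < n, ∀ s, ((node x n f).childrenList (i :: s)).map (node x n f).label =
      ((f i).childrenList s).map (f i).label := by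
    intro i hi s
    simp only [UTree.childrenList, childCount_node_cons x n f hi, List.map_map]
    rfl
  constructor
  · intro h
    refine ⟨root ▸ h [] (node x n f).nil_mem, fun i hi s hs => ?_⟩
    exact sub i hi s ▸ h (i :: s) ((cons_mem_node x n f i s).2 ⟨hi, hs⟩)
  · rintro ⟨h, hsub⟩ s hs
    cases s with
    | nil => exact root.symm ▸ h
    | cons i s =>
      obtain ⟨hi, hs⟩ := (cons_mem_node x n f i s).1 hs
      exact (sub i hi s).symm ▸ hsub i hi s hs

end

lemma strAux_node_cons (x : ABC) (n : ℕ) (f : ℕ → UTree ABC) {i : ℕ} (hi : i < n) (k : ℕ) :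
    ∀ s, strAux (node x n f) k (i :: s) = strAux (f i) k s := by
  induction k with
  | zero => intro s; rfl
  | succ k ih =>
    intro s
    simp only [strAux, childCount_node_cons x n f hi, List.cons_append, ih]
    rfl

/-- `w` is the tag string of `T`, computed with any sufficient amount of fuel. Quantifying over
the fuel makes the notion compositional. -/
def Rep (T : UTree ABC) (w : List Tag) : Prop :=
  ∀ k, T.dom.sup List.length < k → strAux T k [] = w

lemma Rep.strOf_eq {T : UTree ABC} {w : List Tag} (h : Rep T w) : strOf T = w :=
  h _ (Nat.lt_succ_self _)

lemma rep_node (x : ABC) (n : ℕ) (f : ℕ → UTree ABC) (w : ℕ → List Tag)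
    (h : ∀ i < n, Rep (f i) (w i)) :
    Rep (node x n f) (Sum.inl x :: ((List.range n).map w).flatten ++ [Sum.inr x]) := by
  intro k hk
  obtain _ | k := k
  · simp at hk
  have key : ∀ i < n, strAux (node x n f) k [i] = w i := by
    intro i hi
    rw [strAux_node_cons x n f hi]
    refine h i hi k ?_
    -- the node of maximal length in `f i` becomes one longer in `node x n f`
    obtain ⟨s, hs, hmax⟩ := Finset.exists_mem_eq_sup (f i).dom ⟨[], (f i).nil_mem⟩ List.length
    have := Finset.le_sup (f := List.length) ((cons_mem_node x n f i s).2 ⟨hi, hs⟩)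
    simp only [List.length_cons] at this
    omega
  have hmap : (List.range n).map (fun i => strAux (node x n f) k [i]) = (List.range n).map w :=
    List.map_congr_left fun i hi => key i (List.mem_range.1 hi)
  simp only [strAux, childCount_node_nil, List.nil_append, hmap]
  rfl

/-! ### Spines -/

/-- The single-node tree labelled `x`, as a `node` with an empty family of subtrees (the
family still has to be given some value). -/
def leaf (x : ABC) : UTree ABC :=
  node x 0 fun _ =>
    { dom := {[]}
      nil_mem := by simp
      prefix_closed := by
        intro s t hs ht
        simp_all
      sib_closed := by simp
      label := fun _ => x }

/-- The spine with one inner node for each entry `(p, q)` of the list: the node has a `c`-leaf to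
the left of its spine child iff `p`, and a `b`-leaf to the right of it iff `q`. -/
def spine : List (Bool × Bool) → UTree ABC
  | [] => leaf ABC.a
  | (false, false) :: l => node ABC.a 1 fun _ => spine l
  | (false, true) :: l => node ABC.a 2 fun i => if i = 0 then spine l else leaf ABC.b
  | (true, false) :: l => node ABC.a 2 fun i => if i = 0 then leaf ABC.c else spine l
  | (true, true) :: l => node ABC.a 3 fun i =>
      if i = 0 then leaf ABC.c else if i = 1 then spine l else leaf ABC.b

/-- The tags of a spine up to and including those of its bottom node. -/
def opening : List Bool → List Tag
  | [] => [Sum.inl ABC.a, Sum.inr ABC.a]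
  | p :: l => Sum.inl ABC.a :: (if p then [Sum.inl ABC.c, Sum.inr ABC.c] else []) ++ opening l

/-- The tags of a spine after those of its bottom node. -/
def closing : List Bool → List Tag
  | [] => []
  | q :: l => closing l ++ (if q then [Sum.inl ABC.b, Sum.inr ABC.b] else []) ++ [Sum.inr ABC.a]

lemma rep_leaf (x : ABC) : Rep (leaf x) [Sum.inl x, Sum.inr x] :=
  rep_node x 0 _ (fun _ => []) (by simp)

lemma rep_spine : ∀ l : List (Bool × Bool),
    Rep (spine l) (opening (l.map Prod.fst) ++ closing (l.map Prod.snd))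
  | [] => rep_leaf ABC.a
  | (p, q) :: l => by
    have ih := rep_spine l
    have hb := rep_leaf ABC.b
    have hc := rep_leaf ABC.c
    set w := opening (l.map Prod.fst) ++ closing (l.map Prod.snd) with hw
    rcases p <;> rcases q
    · have := rep_node ABC.a 1 (fun _ => spine l) (fun _ => w) (fun _ _ => ih)
      simpa [spine, opening, closing, hw, List.range_succ] using this
    · have := rep_node ABC.a 2 (fun i => if i = 0 then spine l else leaf ABC.b)
        (fun i => if i = 0 then w else [Sum.inl ABC.b, Sum.inr ABC.b])
        (fun i _ => by split_ifs <;> assumption)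
      simpa [spine, opening, closing, hw, List.range_succ] using this
    · have := rep_node ABC.a 2 (fun i => if i = 0 then leaf ABC.c else spine l)
        (fun i => if i = 0 then [Sum.inl ABC.c, Sum.inr ABC.c] else w)
        (fun i _ => by split_ifs <;> assumption)
      simpa [spine, opening, closing, hw, List.range_succ] using this
    · have := rep_node ABC.a 3
        (fun i => if i = 0 then leaf ABC.c else if i = 1 then spine l else leaf ABC.b)
        (fun i => if i = 0 then [Sum.inl ABC.c, Sum.inr ABC.c] else
          if i = 1 then w else [Sum.inl ABC.b, Sum.inr ABC.b])
        (fun i _ => by split_ifs <;> assumption)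
      simpa [spine, opening, closing, hw, List.range_succ] using this

lemma mem_matches_d1_a (w : List ABC) : w ∈ (d1 ABC.a).matches' ↔
    w = [ABC.a, ABC.b] ∨ w = [ABC.c, ABC.a] ∨ w = [] := by
  have h : ∀ u v : List ABC, u ∈ ({v} : Language ABC) ↔ u = v := fun _ _ => Iff.rfl
  simp [d1, Language.mem_add, Language.mem_mul, Language.mem_one, h, eq_comm]

lemma satDTD_leaf (x : ABC) : SatDTD (leaf x) d1 := by
  rw [leaf, satDTD_node]
  cases x <;> simp [d1, Language.mem_add, Language.mem_one]

lemma label_spine (l : List (Bool × Bool)) : (spine l).label [] = ABC.a := by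
  rcases l with _ | ⟨⟨_ | _, _ | _⟩, l⟩ <;> rfl

lemma label_leaf (x : ABC) : (leaf x).label [] = x := rfl

lemma satDTD_spine : ∀ l : List (Bool × Bool), SatDTD (spine l) d1 ↔ ∀ x ∈ l, x.1 ≠ x.2
  | [] => by simp [spine, satDTD_leaf]
  | (p, q) :: l => by
    have ih := satDTD_spine l
    rcases p <;> rcases q <;>
      simp [spine, satDTD_node, mem_matches_d1_a, List.range_succ, label_spine, label_leaf, ih,
        Nat.le_one_iff_eq_zero_or_eq_one, satDTD_leaf]

/-- There is no regular language `L` over the tag alphabet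
such that a tree satisfies `d₁` iff its string representation lies in `L`;
in particular `Sat(d₁)` is not of the form `L^str_A` for a finite string
automaton `A`. -/
theorem no_streaming_automaton_for_d1 :
    ¬ ∃ L : Language Tag, L.IsRegular ∧
        ∀ T : UTree ABC, SatDTD T d1 ↔ strOf T ∈ L := by
  rintro ⟨L, ⟨σ, hσ, M, rfl⟩, hL⟩
  obtain ⟨p, q, hpq, hne⟩ : ∃ p q : Fin (Fintype.card σ) → Bool,
      M.eval (opening (List.ofFn p)) = M.eval (opening (List.ofFn q)) ∧ p ≠ q :=
    Fintype.exists_ne_map_eq_of_card_lt (fun p => M.eval (opening (List.ofFn p)))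
      (by simpa using Nat.lt_two_pow_self) |>.imp fun p ⟨q, hne, heq⟩ => ⟨q, heq, hne⟩
  -- `r` is the pattern of `c`-leaves; the `b`-leaves always sit at the complement of `p`
  have key : ∀ r : Fin (Fintype.card σ) → Bool, (∀ i, r i ≠ !p i) ↔
      M.evalFrom (M.eval (opening (List.ofFn r))) (closing (List.ofFn fun i => !p i)) ∈
        M.accept := by
    intro r
    have h := hL (spine (List.ofFn fun i => (r i, !p i)))
    rw [satDTD_spine, (rep_spine _).strOf_eq, List.map_ofFn, List.map_ofFn, DFA.mem_accepts,
      DFA.eval, DFA.evalFrom_of_append] at h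
    simpa [List.mem_ofFn, Function.comp_def, DFA.eval] using h
  have hq := (key q).2 (hpq ▸ (key p).1 (by simp))
  exact hne (funext fun i => by simpa using (hq i).symm)

end UnrankedTrees
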